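/- Let p be a real polynomial in n variables, homogeneous of degree d, hyperbolic in direction e ∈ ℝⁿ with p(e) > 0, and suppose the hyperbolicity cone Λ₊ is regular (contains no nonzero linear subspace). Then for every e' ∈ Λ₊₊, the Hessian H(e') of f(x) = −ln p(x) at e' is positive definite; in particular f is strictly convex on Λ₊₊. -/

import Mathlib

open scoped BigOperators

/-- The univariate polynomial `t ↦ p(t • e - x)` associated to a multivariate polynomial `p`,
a direction `e` and a point `x`. -/
noncomputable def hypCharPoly {n : ℕ} (p : MvPolynomial (Fin n) ℝ) (e x : Fin n → ℝ) :
    Polynomial ℝ :=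
  MvPolynomial.aeval (fun i => Polynomial.C (e i) * Polynomial.X - Polynomial.C (x i)) p

/-- `p` is a homogeneous polynomial of degree `d`, hyperbolic in direction `e`:
`p(e) ≠ 0` and for every `x` the polynomial `t ↦ p(t • e - x)` has `d` real roots
counted with multiplicity. -/
def IsHyperbolicPoly {n : ℕ} (p : MvPolynomial (Fin n) ℝ) (e : Fin n → ℝ) (d : ℕ) : Prop :=
  p.IsHomogeneous d ∧ MvPolynomial.eval e p ≠ 0 ∧
    ∀ x : Fin n → ℝ, Multiset.card (hypCharPoly p e x).roots = d

/-- The (closed) hyperbolicity cone `Λ₊`: all hyperbolic eigenvalues are nonnegative. -/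
def hypConeClosed {n : ℕ} (p : MvPolynomial (Fin n) ℝ) (e : Fin n → ℝ) : Set (Fin n → ℝ) :=
  {x | ∀ r ∈ (hypCharPoly p e x).roots, (0:ℝ) ≤ r}

/-- The open hyperbolicity cone `Λ₊₊`: all hyperbolic eigenvalues are positive. -/
def hypConeOpen {n : ℕ} (p : MvPolynomial (Fin n) ℝ) (e : Fin n → ℝ) : Set (Fin n → ℝ) :=
  {x | ∀ r ∈ (hypCharPoly p e x).roots, (0:ℝ) < r}

/-- The gradient of `f(x) = -ln p(x)`, namely `g(x)ᵢ = -(∂ᵢ p)(x) / p(x)`. -/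
noncomputable def gradNegLog {n : ℕ} (p : MvPolynomial (Fin n) ℝ) (x : Fin n → ℝ) :
    Fin n → ℝ :=
  fun i => -(MvPolynomial.eval x (MvPolynomial.pderiv i p)) / MvPolynomial.eval x p

/-- The Hessian of `f(x) = -ln p(x)`, namely
`H(x)ᵢⱼ = (∂ᵢp)(x)(∂ⱼp)(x)/p(x)² - (∂ᵢ∂ⱼp)(x)/p(x)`. -/
noncomputable def hessNegLog {n : ℕ} (p : MvPolynomial (Fin n) ℝ) (x : Fin n → ℝ) :
    Matrix (Fin n) (Fin n) ℝ :=
  Matrix.of fun i j =>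
    MvPolynomial.eval x (MvPolynomial.pderiv i p) * MvPolynomial.eval x (MvPolynomial.pderiv j p)
        / (MvPolynomial.eval x p) ^ 2
      - MvPolynomial.eval x (MvPolynomial.pderiv i (MvPolynomial.pderiv j p))
        / MvPolynomial.eval x p

/-- The local inner product `⟨u, v⟩_{e'} = uᵀ H(e') v`. -/
noncomputable def localIP {n : ℕ} (p : MvPolynomial (Fin n) ℝ) (e' u v : Fin n → ℝ) : ℝ :=
  ∑ i, ∑ j, u i * hessNegLog p e' i j * v j

/-- The local norm `‖v‖_{e'} = ⟨v, v⟩_{e'}^{1/2}`. -/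
noncomputable def localNorm {n : ℕ} (p : MvPolynomial (Fin n) ℝ) (e' v : Fin n → ℝ) : ℝ :=
  Real.sqrt (localIP p e' v v)

/-- The closed quadratic cone `K_{e'}(α) = {x : ⟨e', x⟩_{e'} ≥ α ‖x‖_{e'}}`. -/
noncomputable def quadCone {n : ℕ} (p : MvPolynomial (Fin n) ℝ) (e' : Fin n → ℝ) (α : ℝ) :
    Set (Fin n → ℝ) :=
  {x | α * localNorm p e' x ≤ localIP p e' e' x}

/-- The hyperbolicity cone is regular: it contains no nonzero linear subspace. -/
def IsRegularCone {n : ℕ} (p : MvPolynomial (Fin n) ℝ) (e : Fin n → ℝ) : Prop :=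
  ∀ W : Submodule ℝ (Fin n → ℝ), (W : Set (Fin n → ℝ)) ⊆ hypConeClosed p e → W = ⊥

/-!
The restriction `R` of `p` to a line through a hyperbolic direction is real-rooted, and
`(R')² - R R'' = R² ∑ (t - rᵢ)⁻²` is positive off the zeros `rᵢ` of `R` unless `R` is constant.
Hence `-ln p` has a positive second derivative along every line through a point `a` of the open
cone, provided that `a` is a hyperbolic direction and that `p` is not constant on the line.

The first point is Gårding's theorem. A direction `a` is hyperbolic when `p` has no zeros on
`ℝⁿ + i a`. For `y` in the cone of `a`, the set of `x` such that `p(x + i a + t y) ≠ 0` whenever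
`Im t ≥ 0` is open, since homogeneity controls `t → ∞`, and closed, since the leading coefficient
bounds `|p(x + i a + t y)|` below by `|p(y)| (Im t)^d`. It contains `0`, so it is everything; taking
`t = i s` makes all `a + s y` hyperbolic, and letting `s → ∞` gives that `y` is hyperbolic. The cone
of `a` is the connected component of `a` in `{p ≠ 0}`, so it is the cone of each of its points,
and this yields convexity.

For the second point, if `p` is constant on the line `a + ℝ v`, then `ℝ v` lies in the closure of
the cone, so regularity forces `v = 0`.
-/

section UnivariatePolynomial

open Polynomial Topology

theorem splits_of_forall_aeval_ne_zero {Q : ℝ[X]} (h : ∀ t : ℂ, t.im ≠ 0 → aeval t Q ≠ 0) :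
    Q.Splits := by
  refine Splits.of_splits_map (algebraMap ℝ ℂ) (IsAlgClosed.splits _) fun t ht => ?_
  have hroot : aeval t Q = 0 := by
    rw [aeval_def, ← eval_map]
    exact isRoot_of_mem_roots ht
  exact ⟨t.re, Complex.ext rfl (not_ne_iff.1 (mt (h t) (not_ne_iff.2 hroot))).symm⟩

theorem norm_leadingCoeff_mul_pow_le_norm_eval {K : Type*} [NormedField K] {Q : K[X]}
    (hQ : Q.Splits) {t : K} {δ : ℝ} (hδ : 0 ≤ δ) (h : ∀ r, Q.IsRoot r → δ ≤ ‖t - r‖) :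
    ‖Q.leadingCoeff‖ * δ ^ Q.natDegree ≤ ‖Q.eval t‖ := by
  rw [hQ.eval_eq_prod_roots, norm_mul, hQ.natDegree_eq_card_roots]
  gcongr
  calc δ ^ Q.roots.card = (Q.roots.map fun _ => δ).prod := by simp
    _ ≤ (Q.roots.map fun r => ‖t - r‖).prod :=
      Multiset.prod_map_le_prod_map₀ _ _ (fun _ _ => hδ) fun r hr => h r (isRoot_of_mem_roots hr)
    _ = ‖(Q.roots.map fun r => t - r).prod‖ :=
      (congrArg Multiset.prod (Multiset.map_map _ _ _)).symm.trans
        (map_multiset_prod (normHom : K →*₀ ℝ) _).symm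

/-- The Laguerre expression `(R')² - R R''`, which is `-R²` times the second derivative of
`log |R|`; it is positive off the zeros of a nonconstant real-rooted `R`. -/
noncomputable def laguerre {A : Type*} [CommRing A] (R : A[X]) : A[X] :=
  derivative R ^ 2 - R * derivative (derivative R)

theorem laguerre_mul {A : Type*} [CommRing A] (P Q : A[X]) :
    laguerre (P * Q) = laguerre P * Q ^ 2 + P ^ 2 * laguerre Q := by
  simp only [laguerre, derivative_mul, derivative_add]
  ring

theorem laguerre_C {A : Type*} [CommRing A] (c : A) : laguerre (C c) = 0 := by
  simp [laguerre]

theorem laguerre_X_sub_C {A : Type*} [CommRing A] (r : A) : laguerre (X - C r) = 1 := by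
  simp [laguerre]

variable {K : Type*} [Field K] [LinearOrder K] [IsStrictOrderedRing K]

theorem laguerre_eval_nonneg_of_splits {R : K[X]} (hR : R.Splits) (x : K) :
    0 ≤ (laguerre R).eval x := by
  induction hR using Submonoid.closure_induction with
  | mem P hP =>
    obtain ⟨c, rfl⟩ | ⟨r, rfl⟩ := hP
    · simp [laguerre_C]
    · simp [laguerre]
  | one => simp [laguerre]
  | mul P Q _ _ hP hQ =>
    rw [laguerre_mul, eval_add, eval_mul, eval_mul, eval_pow, eval_pow]
    positivity

theorem laguerre_eval_pos_of_splits {R : K[X]} (hR : R.Splits) (hdeg : R.natDegree ≠ 0) {x : K}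
    (hx : R.eval x ≠ 0) : 0 < (laguerre R).eval x := by
  obtain ⟨r, hr⟩ := hR.exists_eval_eq_zero (mt natDegree_eq_of_degree_eq_some hdeg)
  obtain ⟨Q, rfl⟩ := dvd_iff_isRoot.2 hr
  have hQ : 0 ≤ (laguerre Q).eval x :=
    laguerre_eval_nonneg_of_splits (splits_X_sub_C_mul_iff.1 hR) x
  have hQx : Q.eval x ≠ 0 := right_ne_zero_of_mul (eval_mul (R := K) ▸ hx)
  rw [laguerre_mul, laguerre_X_sub_C, one_mul, eval_add, eval_mul, eval_pow, eval_pow]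
  positivity

theorem strictConcaveOn_log_eval_of_splits {R : ℝ[X]} (hR : R.Splits) (hdeg : R.natDegree ≠ 0)
    {s : Set ℝ} (hs : Convex ℝ s) (hne : ∀ t ∈ s, R.eval t ≠ 0) :
    StrictConcaveOn ℝ s fun t => Real.log (R.eval t) := by
  have hcont : ContinuousOn (fun t => Real.log (R.eval t)) s :=
    R.continuous.continuousOn.log hne
  refine strictConcaveOn_of_deriv2_neg hs hcont fun t ht => ?_
  have ht0 : R.eval t ≠ 0 := hne t (interior_subset ht)
  have hderiv : deriv (fun u => Real.log (R.eval u)) =ᶠ[𝓝 t]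
      fun u => (derivative R).eval u / R.eval u := by
    filter_upwards [R.continuous.continuousAt.eventually_ne ht0] with u hu
    exact ((R.hasDerivAt u).log hu).deriv
  have hderiv2 : deriv^[2] (fun u => Real.log (R.eval u)) t =
      -((laguerre R).eval t / R.eval t ^ 2) := by
    rw [Function.iterate_succ_apply, Function.iterate_one, hderiv.deriv_eq,
      (((derivative R).hasDerivAt t).fun_div (R.hasDerivAt t) ht0).deriv]
    simp only [laguerre, eval_sub, eval_pow, eval_mul]
    ring
  rw [hderiv2, neg_lt_zero]
  exact div_pos (laguerre_eval_pos_of_splits hR hdeg ht0) (by positivity)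

end UnivariatePolynomial

section LinePoly

open MvPolynomial

/-- The univariate polynomial `t ↦ p(x + t v)`: the restriction of `p` to the line through `x`
in direction `v`. -/
noncomputable def linePoly {σ R K : Type*} [CommSemiring R] [CommSemiring K] [Algebra R K]
    (p : MvPolynomial σ R) (x v : σ → K) : Polynomial K :=
  aeval (fun i => Polynomial.C (x i) + Polynomial.C (v i) * Polynomial.X) p

variable {σ R K : Type*} [CommSemiring R] {d : ℕ} {p : MvPolynomial σ R}

theorem aeval_smul_of_isHomogeneous [CommSemiring K] [Algebra R K] (hp : p.IsHomogeneous d)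
    (c : K) (z : σ → K) : aeval (c • z) p = c ^ d * aeval z p := by
  simp only [aeval_def, eval₂_eq, Finset.mul_sum]
  refine Finset.sum_congr rfl fun m hm => ?_
  simp only [Pi.smul_apply, smul_eq_mul, mul_pow, Finset.prod_mul_distrib,
    Finset.prod_pow_eq_pow_sum]
  rw [← hp.degree_eq_sum_deg_support hm]
  ring

theorem eval_smul_of_isHomogeneous (hp : p.IsHomogeneous d) (c : R) (x : σ → R) :
    eval (c • x) p = c ^ d * eval x p := by
  simpa only [aeval_eq_eval] using aeval_smul_of_isHomogeneous hp c x

variable [CommSemiring K] [Algebra R K]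

theorem eval_linePoly (p : MvPolynomial σ R) (x v : σ → K) (t : K) :
    (linePoly p x v).eval t = aeval (x + t • v) p := by
  have h := comp_aeval_apply (fun i => Polynomial.C (x i) + Polynomial.C (v i) * Polynomial.X)
    ((Polynomial.aeval t).restrictScalars R) p
  simp only [AlgHom.restrictScalars_apply, Polynomial.coe_aeval_eq_eval] at h
  rw [linePoly, h]
  congr 2
  funext i
  simp [mul_comm t]

theorem eval_zero_linePoly (p : MvPolynomial σ R) (x v : σ → R) :
    (linePoly p x v).eval 0 = eval x p := by
  rw [eval_linePoly, zero_smul, add_zero, aeval_eq_eval]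

theorem map_linePoly {L : Type*} [CommSemiring L] [Algebra R L] [Algebra K L] [IsScalarTower R K L]
    (p : MvPolynomial σ R) (x v : σ → K) :
    (linePoly p x v).map (algebraMap K L) =
      linePoly p (algebraMap K L ∘ x) (algebraMap K L ∘ v) := by
  have h := comp_aeval_apply (fun i => Polynomial.C (x i) + Polynomial.C (v i) * Polynomial.X)
    ((Polynomial.mapAlgHom (Algebra.ofId K L)).restrictScalars R) p
  rw [linePoly, linePoly]
  refine h.trans ?_
  congr 2
  funext i
  simp

theorem natDegree_linePoly_le (hp : p.IsHomogeneous d) (x v : σ → K) :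
    (linePoly p x v).natDegree ≤ d := by
  have h := aeval_natDegree_le (n := 1) _ (hp.map (algebraMap R K)).totalDegree_le
    (fun i => Polynomial.C (x i) + Polynomial.C (v i) * Polynomial.X) fun i => by compute_degree
  rwa [aeval_map_algebraMap, mul_one] at h

theorem coeff_prod_pow_of_natDegree_le_one {s : Finset σ} {f : σ → Polynomial K}
    (hf : ∀ i ∈ s, (f i).natDegree ≤ 1) (m : σ → ℕ) :
    (∏ i ∈ s, f i ^ m i).coeff (∑ i ∈ s, m i) = ∏ i ∈ s, (f i).coeff 1 ^ m i := by
  have h := Polynomial.coeff_prod_of_natDegree_le (s.sigma fun i => Finset.range (m i))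
    (fun k => f k.1) 1 fun k hk => hf k.1 (Finset.mem_sigma.1 hk).1
  simpa only [Finset.prod_sigma, Finset.card_sigma, Finset.prod_const, Finset.card_range,
    mul_one] using h

theorem coeff_linePoly (hp : p.IsHomogeneous d) (x v : σ → K) :
    (linePoly p x v).coeff d = aeval v p := by
  simp only [linePoly, aeval_def, eval₂_eq, Polynomial.finsetSum_coeff]
  refine Finset.sum_congr rfl fun m hm => ?_
  rw [IsScalarTower.algebraMap_apply R K (Polynomial K), Polynomial.algebraMap_eq,
    Polynomial.coeff_C_mul, hp.degree_eq_sum_deg_support hm,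
    coeff_prod_pow_of_natDegree_le_one fun i _ => by compute_degree]
  simp

theorem natDegree_linePoly (hp : p.IsHomogeneous d) (x : σ → K) {v : σ → K}
    (hv : aeval v p ≠ 0) : (linePoly p x v).natDegree = d :=
  Polynomial.natDegree_eq_of_le_of_coeff_ne_zero (natDegree_linePoly_le hp x v)
    (by rwa [coeff_linePoly hp])

theorem leadingCoeff_linePoly (hp : p.IsHomogeneous d) (x : σ → K) {v : σ → K}
    (hv : aeval v p ≠ 0) : (linePoly p x v).leadingCoeff = aeval v p := by
  rw [Polynomial.leadingCoeff, natDegree_linePoly hp x hv, coeff_linePoly hp]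

end LinePoly

section Hessian

open MvPolynomial

theorem derivative_linePoly {σ R K : Type*} [Fintype σ] [CommSemiring R] [CommSemiring K]
    [Algebra R K] (p : MvPolynomial σ R) (x v : σ → K) :
    Polynomial.derivative (linePoly p x v) =
      ∑ i, Polynomial.C (v i) * linePoly (pderiv i p) x v := by
  classical
  induction p using MvPolynomial.induction_on with
  | C c => simp [linePoly, IsScalarTower.algebraMap_apply R K (Polynomial K)]
  | add p q hp hq =>
    simp only [linePoly, map_add, mul_add, Finset.sum_add_distrib] at *
    rw [hp, hq]
  | mul_X p j hp =>
    have hsum : ∑ i, Polynomial.C (v i) * linePoly (pderiv i (X j : MvPolynomial σ R)) x v =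
        Polynomial.C (v j) := by
      simp [linePoly, pderiv_X, Pi.single_apply, apply_ite]
    have hX : Polynomial.derivative (linePoly (X j : MvPolynomial σ R) x v) =
        Polynomial.C (v j) := by
      simp [linePoly]
    simp only [linePoly] at hp hX hsum
    simp only [linePoly, map_mul, Polynomial.derivative_mul, hp, hX, pderiv_mul,
      map_add, mul_add, Finset.sum_add_distrib, ← hsum, Finset.sum_mul, Finset.mul_sum, mul_assoc]
    simp only [mul_left_comm]

theorem pderiv_pderiv_comm {σ R : Type*} [CommRing R] (i j : σ) (p : MvPolynomial σ R) :
    pderiv i (pderiv j p) = pderiv j (pderiv i p) := by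
  classical
  have h : ⁅pderiv (R := R) i, pderiv (R := R) j⁆ = 0 := derivation_ext fun k => by
    simp [Derivation.commutator_apply, pderiv_X, Pi.single_apply, apply_ite]
  rw [← sub_eq_zero, ← Derivation.commutator_apply, h, Derivation.zero_apply]

theorem isHermitian_hessNegLog {n : ℕ} (p : MvPolynomial (Fin n) ℝ) (a : Fin n → ℝ) :
    (hessNegLog p a).IsHermitian := by
  ext i j
  simp only [hessNegLog, Matrix.conjTranspose_apply, Matrix.of_apply, star_trivial]
  rw [pderiv_pderiv_comm j i, mul_comm]

theorem dotProduct_hessNegLog_mulVec {n : ℕ} {p : MvPolynomial (Fin n) ℝ} {a : Fin n → ℝ}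
    (ha : eval a p ≠ 0) (v : Fin n → ℝ) :
    v ⬝ᵥ (hessNegLog p a).mulVec v =
      (laguerre (linePoly p a v)).eval 0 / eval a p ^ 2 := by
  simp only [laguerre, derivative_linePoly, Polynomial.derivative_sum, Polynomial.derivative_C_mul,
    Polynomial.eval_sub, Polynomial.eval_pow,
    Polynomial.eval_finsetSum, Polynomial.eval_mul, Polynomial.eval_C, eval_zero_linePoly]
  simp only [dotProduct, Matrix.mulVec, hessNegLog, Matrix.of_apply, Finset.mul_sum, sq,
    Finset.sum_mul, ← Finset.sum_sub_distrib, Finset.sum_div]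
  refine Finset.sum_congr rfl fun i _ => Finset.sum_congr rfl fun j _ => ?_
  rw [pderiv_pderiv_comm i j]
  field_simp

end Hessian

section HyperbolicDirections

open MvPolynomial Filter Topology

theorem isOpen_setOfPred_forall_add_smul_mem {K E : Type*} [NormedField K] [ProperSpace K]
    [AddCommGroup E] [Module K E] [TopologicalSpace E] [ContinuousAdd E] [ContinuousSMul K E]
    {U : Set E} (hU : IsOpen U) (hsmul : ∀ c : K, c ≠ 0 → ∀ z ∈ U, c • z ∈ U)
    {S : Set K} (hS : IsClosed S) {y : E} (hy : y ∈ U) :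
    IsOpen {z | ∀ t ∈ S, z + t • y ∈ U} := by
  refine isOpen_iff_eventually.2 fun z hz => ?_
  have hfar : ∀ᶠ q : E × K in 𝓝 z ×ˢ Bornology.cobounded K, q.1 + q.2 • y ∈ U := by
    have hlim : Tendsto (fun q : E × K => q.2⁻¹ • q.1 + y) (𝓝 z ×ˢ Bornology.cobounded K)
        (𝓝 y) := by
      have hinv : Tendsto (fun t : K => t⁻¹) (Bornology.cobounded K) (𝓝 0) :=
        tendsto_inv₀_cobounded
      simpa using ((hinv.comp tendsto_snd).smul tendsto_fst).add_const y
    filter_upwards [hlim.eventually_mem (hU.mem_nhds hy),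
      tendsto_snd.eventually (Bornology.eventually_ne_cobounded 0)] with q hq hq0
    simpa [smul_add, smul_inv_smul₀ hq0] using hsmul q.2 hq0 _ hq
  rw [Metric.cobounded_eq_cocompact] at hfar
  obtain ⟨P, hP, Q, hQ, hPQ⟩ := eventually_prod_iff.1 hfar
  obtain ⟨C, hC, hCQ⟩ := mem_cocompact.1 hQ
  have hnear : ∀ᶠ z' in 𝓝 z, ∀ t ∈ S ∩ C, z' + t • y ∈ U :=
    (hC.inter_left hS).eventually_forall_of_forall_eventually fun t ht =>
      (show Continuous fun q : E × K => q.1 + q.2 • y by fun_prop).continuousAt.eventually_mem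
        (hU.mem_nhds (hz t ht.1))
  filter_upwards [hP, hnear] with z' hz' hz'C t ht
  by_cases htC : t ∈ C
  · exact hz'C t ⟨ht, htC⟩
  · exact hPQ hz' (hCQ htC)

theorem continuous_aeval {σ R K : Type*} [CommSemiring R] [CommSemiring K] [TopologicalSpace K]
    [IsTopologicalSemiring K] [Algebra R K] (p : MvPolynomial σ R) :
    Continuous fun z : σ → K => aeval z p := by
  simpa only [aeval_def, eval_map] using MvPolynomial.continuous_eval (map (algebraMap R K) p)

theorem isOpen_setOfPred_forall_aeval_add_smul_ne_zero {σ R K : Type*} [CommSemiring R]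
    [NormedField K] [ProperSpace K] [Algebra R K] {d : ℕ} {p : MvPolynomial σ R}
    (hp : p.IsHomogeneous d) {S : Set K} (hS : IsClosed S) {y : σ → K} (hy : aeval y p ≠ 0) :
    IsOpen {z : σ → K | ∀ t ∈ S, aeval (z + t • y) p ≠ 0} := by
  refine isOpen_setOfPred_forall_add_smul_mem (U := {z | aeval z p ≠ 0})
    (isOpen_ne_fun (continuous_aeval p) continuous_const) (fun c hc z hz => ?_) hS hy
  rw [Set.mem_ofPred_eq, aeval_smul_of_isHomogeneous hp]
  exact mul_ne_zero (pow_ne_zero d hc) hz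

/-- The point `x + i y` of `ℂ^σ`. -/
def tubePoint {σ : Type*} (x y : σ → ℝ) : σ → ℂ := fun i => ⟨x i, y i⟩

/-- `a` is a hyperbolic direction of `p`: `p` has no zeros in `ℝ^σ + i a`. For homogeneous `p`
this says that `p(a) ≠ 0` and `t ↦ p(x + t a)` has only real zeros, for all real `x`. -/
def IsHypDir {σ : Type*} (p : MvPolynomial σ ℝ) (a : σ → ℝ) : Prop :=
  ∀ x, aeval (tubePoint x a) p ≠ 0

/-- The points from which the ray in direction `a` avoids the zeros of `p`. For a hyperbolic
direction `a` this is the open hyperbolicity cone. -/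
def rayCone {σ : Type*} (p : MvPolynomial σ ℝ) (a : σ → ℝ) : Set (σ → ℝ) :=
  {y | ∀ s : ℝ, 0 ≤ s → eval (y + s • a) p ≠ 0}

variable {σ : Type*} {d : ℕ} {p : MvPolynomial σ ℝ} {a x y : σ → ℝ}

theorem continuous_tubePoint_left (y : σ → ℝ) : Continuous fun x => tubePoint x y := by
  refine continuous_pi fun i => ?_
  simp only [tubePoint, Complex.mk_eq_add_mul_I]
  fun_prop

theorem continuous_tubePoint_right (x : σ → ℝ) : Continuous (tubePoint x) := by
  refine continuous_pi fun i => ?_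
  simp only [tubePoint, Complex.mk_eq_add_mul_I]
  fun_prop

theorem tubePoint_add_smul (x y v : σ → ℝ) (t : ℂ) :
    tubePoint x y + t • tubePoint v 0 = tubePoint (x + t.re • v) (y + t.im • v) := by
  ext i
  simp [tubePoint, Complex.ext_iff]

theorem ofReal_smul_tubePoint (c : ℝ) (x y : σ → ℝ) :
    (c : ℂ) • tubePoint x y = tubePoint (c • x) (c • y) := by
  ext i
  simp [tubePoint, Complex.ext_iff]

theorem I_smul_tubePoint_zero (x : σ → ℝ) : Complex.I • tubePoint x 0 = tubePoint 0 x := by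
  ext i
  simp [tubePoint, Complex.ext_iff]

theorem aeval_tubePoint_zero (p : MvPolynomial σ ℝ) (x : σ → ℝ) :
    aeval (tubePoint x 0) p = (eval x p : ℂ) :=
  aeval_algebraMap_apply ℂ x p

theorem aeval_linePoly_complex (p : MvPolynomial σ ℝ) (x v : σ → ℝ) (t : ℂ) :
    Polynomial.aeval t (linePoly p x v) = aeval (tubePoint x 0 + t • tubePoint v 0) p := by
  rw [Polynomial.aeval_def, ← Polynomial.eval_map, map_linePoly, eval_linePoly]
  rfl

theorem norm_aeval_mul_pow_le {R K : Type*} [CommSemiring R] [NormedField K] [Algebra R K]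
    {p : MvPolynomial σ R} (hp : p.IsHomogeneous d) {z y : σ → K} (hs : (linePoly p z y).Splits)
    {t : K} {δ : ℝ} (hδ : 0 ≤ δ) (h : ∀ r : K, aeval (z + r • y) p = 0 → δ ≤ ‖t - r‖) :
    ‖aeval y p‖ * δ ^ d ≤ ‖aeval (z + t • y) p‖ := by
  rcases eq_or_ne (aeval y p) 0 with hy | hy
  · simp [hy]
  rw [← leadingCoeff_linePoly hp z hy, ← eval_linePoly, ← natDegree_linePoly hp z hy]
  exact norm_leadingCoeff_mul_pow_le_norm_eval hs hδ fun r hr => h r (eval_linePoly p z y r ▸ hr)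

theorem norm_aeval_mul_im_pow_le (hp : p.IsHomogeneous d) {z y : σ → ℂ}
    (h : ∀ t : ℂ, 0 < t.im → aeval (z + t • y) p ≠ 0) {t : ℂ} (ht : 0 < t.im) :
    ‖aeval y p‖ * t.im ^ d ≤ ‖aeval (z + t • y) p‖ := by
  refine norm_aeval_mul_pow_le hp (IsAlgClosed.splits _) ht.le fun r hr => ?_
  have hr_im : r.im ≤ 0 := not_lt.1 fun hpos => h r hpos hr
  calc t.im ≤ (t - r).im := by rw [Complex.sub_im]; linarith
    _ ≤ ‖t - r‖ := Complex.im_le_norm _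

theorem IsHypDir.eval_ne_zero (hp : p.IsHomogeneous d) (ha : IsHypDir p a) : eval a p ≠ 0 := by
  have h := ha 0
  rw [← I_smul_tubePoint_zero, aeval_smul_of_isHomogeneous hp, aeval_tubePoint_zero] at h
  exact_mod_cast right_ne_zero_of_mul h

theorem IsHypDir.smul (hp : p.IsHomogeneous d) (ha : IsHypDir p a) {c : ℝ} (hc : c ≠ 0) :
    IsHypDir p (c • a) := fun x => by
  rw [← smul_inv_smul₀ hc x, ← ofReal_smul_tubePoint, aeval_smul_of_isHomogeneous hp]
  exact mul_ne_zero (pow_ne_zero d (Complex.ofReal_ne_zero.2 hc)) (ha _)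

theorem IsHypDir.aeval_add_smul_ne_zero (hp : p.IsHomogeneous d) (ha : IsHypDir p a)
    (x : σ → ℝ) {t : ℂ} (ht : t.im ≠ 0) : aeval (tubePoint x 0 + t • tubePoint a 0) p ≠ 0 := by
  rw [tubePoint_add_smul, zero_add]
  exact ha.smul hp ht _

theorem IsHypDir.splits_linePoly_right (hp : p.IsHomogeneous d) (ha : IsHypDir p a) (x : σ → ℝ) :
    (linePoly p x a).Splits := splits_of_forall_aeval_ne_zero fun t ht => by
  rw [aeval_linePoly_complex]
  exact ha.aeval_add_smul_ne_zero hp x ht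

theorem IsHypDir.splits_linePoly_left (hp : p.IsHomogeneous d) (ha : IsHypDir p a) (v : σ → ℝ) :
    (linePoly p a v).Splits := splits_of_forall_aeval_ne_zero fun t ht => by
  have ht0 : t ≠ 0 := fun h => ht (h ▸ Complex.zero_im)
  have hinv : t⁻¹.im ≠ 0 := by simp [Complex.inv_im, ht, ht0]
  have hswap : tubePoint a 0 + t • tubePoint v 0 = t • (tubePoint v 0 + t⁻¹ • tubePoint a 0) := by
    rw [smul_add, smul_inv_smul₀ ht0, add_comm]
  rw [aeval_linePoly_complex, hswap, aeval_smul_of_isHomogeneous hp]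
  exact mul_ne_zero (pow_ne_zero d ht0) (ha.aeval_add_smul_ne_zero hp v hinv)

theorem IsHypDir.norm_eval_le (hp : p.IsHomogeneous d) (ha : IsHypDir p a) (x : σ → ℝ) :
    ‖eval a p‖ ≤ ‖aeval (tubePoint x a) p‖ := by
  have h := norm_aeval_mul_im_pow_le hp (z := tubePoint x 0) (y := tubePoint a 0)
    (fun t ht => ha.aeval_add_smul_ne_zero hp x ht.ne') (t := Complex.I) (by simp)
  simpa [tubePoint_add_smul, aeval_tubePoint_zero] using h

theorem IsHypDir.of_mem_closure (hp : p.IsHomogeneous d) (hy : y ∈ closure {a | IsHypDir p a})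
    (hy0 : eval y p ≠ 0) : IsHypDir p y := fun x => by
  have hclosed : IsClosed {a | ‖eval a p‖ ≤ ‖aeval (tubePoint x a) p‖} :=
    isClosed_le (continuous_eval p).norm
      ((continuous_aeval p).comp (continuous_tubePoint_right x)).norm
  have hle : ‖eval y p‖ ≤ ‖aeval (tubePoint x y) p‖ :=
    closure_minimal (fun _ ha => IsHypDir.norm_eval_le hp ha x) hclosed hy
  exact norm_pos_iff.1 ((norm_pos_iff.2 hy0).trans_le hle)

theorem IsHypDir.aeval_tubePoint_zero_add_smul_ne_zero (hp : p.IsHomogeneous d)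
    (ha : IsHypDir p a) (hy : y ∈ rayCone p a) {t : ℂ} (ht : 0 ≤ t.im) :
    aeval (tubePoint 0 a + t • tubePoint y 0) p ≠ 0 := by
  rcases eq_or_ne t 0 with rfl | ht0
  · rw [zero_smul, add_zero]
    exact ha 0
  have hswap : tubePoint 0 a + t • tubePoint y 0 =
      t • (tubePoint y 0 + (Complex.I / t) • tubePoint a 0) := by
    rw [smul_add, smul_smul, mul_div_cancel₀ _ ht0, I_smul_tubePoint_zero, add_comm]
  rw [hswap, aeval_smul_of_isHomogeneous hp]
  refine mul_ne_zero (pow_ne_zero d ht0) ?_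
  by_cases him : (Complex.I / t).im = 0
  · have hre : 0 ≤ (Complex.I / t).re := by
      simpa [Complex.div_re] using div_nonneg ht (Complex.normSq_nonneg t)
    rw [tubePoint_add_smul, him, zero_smul, add_zero, aeval_tubePoint_zero]
    exact Complex.ofReal_ne_zero.2 (hy _ hre)
  · exact ha.aeval_add_smul_ne_zero hp y him

theorem eval_ne_zero_of_mem_rayCone (hy : y ∈ rayCone p a) : eval y p ≠ 0 := by
  simpa using hy 0 le_rfl

theorem IsHypDir.aeval_tubePoint_add_smul_ne_zero (hp : p.IsHomogeneous d) (ha : IsHypDir p a)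
    (hy : y ∈ rayCone p a) (x : σ → ℝ) {t : ℂ} (ht : 0 ≤ t.im) :
    aeval (tubePoint x a + t • tubePoint y 0) p ≠ 0 := by
  have hy0 : aeval (tubePoint y 0) p ≠ 0 := by
    rw [aeval_tubePoint_zero]
    exact Complex.ofReal_ne_zero.2 (eval_ne_zero_of_mem_rayCone hy)
  set G : Set (σ → ℝ) :=
    {x | ∀ t ∈ {t : ℂ | 0 ≤ t.im}, aeval (tubePoint x a + t • tubePoint y 0) p ≠ 0}
  have hopen : IsOpen G :=
    (isOpen_setOfPred_forall_aeval_add_smul_ne_zero hp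
      (isClosed_le continuous_const Complex.continuous_im) hy0).preimage
        (continuous_tubePoint_left a)
  have hclosed : IsClosed G := by
    refine isClosed_of_closure_subset fun x hx t ht => ?_
    rcases (show 0 ≤ t.im from ht).eq_or_lt with him | him
    · rw [tubePoint_add_smul, ← him, zero_smul, add_zero]
      exact ha _
    · have hle : ‖aeval (tubePoint y 0) p‖ * t.im ^ d ≤
          ‖aeval (tubePoint x a + t • tubePoint y 0) p‖ :=
        closure_minimal
          (fun x (hxG : x ∈ G) => norm_aeval_mul_im_pow_le hp (fun t ht => hxG t ht.le) him)
          (isClosed_le continuous_const ((continuous_aeval p).comp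
            ((continuous_tubePoint_left a).add continuous_const)).norm) hx
      exact norm_pos_iff.1 ((mul_pos (norm_pos_iff.2 hy0) (pow_pos him d)).trans_le hle)
  have huniv : G = Set.univ := IsClopen.eq_univ ⟨hclosed, hopen⟩
    ⟨0, fun t ht => ha.aeval_tubePoint_zero_add_smul_ne_zero hp hy ht⟩
  exact (huniv ▸ Set.mem_univ x : x ∈ G) t ht

theorem IsHypDir.add_smul (hp : p.IsHomogeneous d) (ha : IsHypDir p a) (hy : y ∈ rayCone p a)
    {s : ℝ} (hs : 0 ≤ s) : IsHypDir p (a + s • y) := fun x => by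
  have h := ha.aeval_tubePoint_add_smul_ne_zero hp hy x (t := s * Complex.I) (by simpa using hs)
  simpa [tubePoint_add_smul] using h

theorem IsHypDir.of_mem_rayCone (hp : p.IsHomogeneous d) (ha : IsHypDir p a)
    (hy : y ∈ rayCone p a) : IsHypDir p y := by
  have hlim : Tendsto (fun ε : ℝ => ε • a + y) (𝓝[>] 0) (𝓝 y) := by
    have hcont : Continuous fun ε : ℝ => ε • a + y := by fun_prop
    simpa using (hcont.tendsto 0).mono_left nhdsWithin_le_nhds
  refine .of_mem_closure hp (mem_closure_of_tendsto hlim ?_) (eval_ne_zero_of_mem_rayCone hy)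
  filter_upwards [self_mem_nhdsWithin] with ε hε
  have hε0 : 0 < ε := hε
  have hdir := (ha.add_smul hp hy (inv_nonneg.2 hε0.le)).smul hp hε0.ne'
  rwa [smul_add, smul_inv_smul₀ hε0.ne'] at hdir

theorem IsHypDir.abs_eval_mul_pow_le (hp : p.IsHomogeneous d) (ha : IsHypDir p a)
    (hy : y ∈ rayCone p a) {s : ℝ} (hs : 0 ≤ s) :
    |eval a p| * s ^ d ≤ |eval (y + s • a) p| := by
  refine norm_aeval_mul_pow_le hp (ha.splits_linePoly_right hp y) hs fun r hr => ?_
  have hr0 : r < 0 := not_le.1 fun h => hy r h hr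
  calc s ≤ s - r := by linarith
    _ ≤ ‖s - r‖ := le_abs_self _

theorem IsHypDir.eval_add_smul_ne_zero_of_mem_closure (hp : p.IsHomogeneous d)
    (ha : IsHypDir p a) (hx : x ∈ closure (rayCone p a)) {s : ℝ} (hs : 0 < s) :
    eval (x + s • a) p ≠ 0 := by
  have hclosed : IsClosed {y | |eval a p| * s ^ d ≤ |eval (y + s • a) p|} :=
    isClosed_le continuous_const
      ((continuous_eval p).comp (continuous_id.add continuous_const)).abs
  have hle : |eval a p| * s ^ d ≤ |eval (x + s • a) p| :=
    closure_minimal (fun _ hy => ha.abs_eval_mul_pow_le hp hy hs.le) hclosed hx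
  exact abs_pos.1 ((mul_pos (abs_pos.2 (ha.eval_ne_zero hp)) (pow_pos hs d)).trans_le hle)

theorem smul_add_smul_mem_rayCone (hp : p.IsHomogeneous d) (hy : y ∈ rayCone p a) {b c : ℝ}
    (hb : 0 < b) (hc : 0 ≤ c) : b • y + c • a ∈ rayCone p a := fun s hs => by
  have hscale : b • y + c • a + s • a = b • (y + ((c + s) / b) • a) := by
    rw [smul_add, smul_smul, mul_div_cancel₀ _ hb.ne', add_smul, add_assoc]
  rw [hscale, eval_smul_of_isHomogeneous hp]
  exact mul_ne_zero (pow_ne_zero d hb.ne') (hy _ (by positivity))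

theorem self_mem_rayCone (hp : p.IsHomogeneous d) (ha : eval a p ≠ 0) : a ∈ rayCone p a :=
  fun s hs => by
    have hs1 : 1 + s ≠ 0 := by positivity
    rw [← one_smul ℝ a, smul_smul, mul_one, ← add_smul, eval_smul_of_isHomogeneous hp]
    exact mul_ne_zero (pow_ne_zero d hs1) ha

theorem starConvex_rayCone (hp : p.IsHomogeneous d) (ha : eval a p ≠ 0) :
    StarConvex ℝ a (rayCone p a) := by
  refine starConvex_iff_forall_pos (self_mem_rayCone hp ha) |>.2 fun y hy c b hc hb _ => ?_
  rw [add_comm]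
  exact smul_add_smul_mem_rayCone hp hy hb hc.le

theorem isOpen_rayCone (hp : p.IsHomogeneous d) (ha : eval a p ≠ 0) : IsOpen (rayCone p a) :=
  isOpen_setOfPred_forall_aeval_add_smul_ne_zero hp isClosed_Ici ha

theorem IsHypDir.rayCone_eq_connectedComponentIn (hp : p.IsHomogeneous d) (ha : IsHypDir p a) :
    rayCone p a = connectedComponentIn {x | eval x p ≠ 0} a := by
  have ha0 := ha.eval_ne_zero hp
  have hmem := self_mem_rayCone hp ha0
  have hconn : IsPreconnected (rayCone p a) :=
    ((starConvex_rayCone hp ha0).isPathConnected hmem).isConnected.isPreconnected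
  refine (hconn.subset_connectedComponentIn hmem fun _ => eval_ne_zero_of_mem_rayCone).antisymm ?_
  refine isPreconnected_connectedComponentIn.subset_of_closure_inter_subset
    (isOpen_rayCone hp ha0) ⟨a, mem_connectedComponentIn ha0, hmem⟩ ?_
  rintro x ⟨hx, hxcomp⟩ s hs
  rcases hs.eq_or_lt with rfl | hs
  · rw [zero_smul, add_zero]
    exact connectedComponentIn_subset _ _ hxcomp
  · exact ha.eval_add_smul_ne_zero_of_mem_closure hp hx hs

theorem IsHypDir.rayCone_eq (hp : p.IsHomogeneous d) (ha : IsHypDir p a) (hy : y ∈ rayCone p a) :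
    rayCone p y = rayCone p a := by
  have hydir := ha.of_mem_rayCone hp hy
  rw [ha.rayCone_eq_connectedComponentIn hp] at hy ⊢
  rw [hydir.rayCone_eq_connectedComponentIn hp, connectedComponentIn_eq hy]

theorem IsHypDir.convex_rayCone (hp : p.IsHomogeneous d) (ha : IsHypDir p a) :
    Convex ℝ (rayCone p a) := by
  refine convex_iff_forall_pos.2 fun x hx y hy b c hb hc _ => ?_
  rw [← ha.rayCone_eq hp hy] at hx ⊢
  exact smul_add_smul_mem_rayCone hp hx hb hc.le

theorem smul_mem_closure_rayCone (hp : p.IsHomogeneous d) (ha : eval a p ≠ 0)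
    (hv : (linePoly p a x).natDegree = 0) (c : ℝ) : c • x ∈ closure (rayCone p a) := by
  have hconst : ∀ s : ℝ, eval (a + s • x) p = eval a p := fun s => by
    rw [← eval_zero_linePoly p a x, ← aeval_eq_eval, ← eval_linePoly,
      Polynomial.eq_C_of_natDegree_eq_zero hv, Polynomial.eval_C, Polynomial.eval_C]
  have hmem : ∀ ε : ℝ, 0 < ε → c • x + ε • a ∈ rayCone p a := fun ε hε s hs => by
    have hpos : ε + s ≠ 0 := by positivity
    have hscale : c • x + ε • a + s • a = (ε + s) • (a + (c / (ε + s)) • x) := by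
      rw [smul_add, smul_smul, mul_div_cancel₀ _ hpos, add_assoc, ← add_smul, add_comm]
    rw [hscale, eval_smul_of_isHomogeneous hp, hconst]
    exact mul_ne_zero (pow_ne_zero d hpos) ha
  have hlim : Tendsto (fun ε : ℝ => c • x + ε • a) (𝓝[>] 0) (𝓝 (c • x)) := by
    have hcont : Continuous fun ε : ℝ => c • x + ε • a := by fun_prop
    simpa using (hcont.tendsto 0).mono_left nhdsWithin_le_nhds
  exact mem_closure_of_tendsto hlim (by filter_upwards [self_mem_nhdsWithin] using hmem)

theorem IsHypDir.strictConcaveOn_log_eval (hp : p.IsHomogeneous d) (ha : IsHypDir p a)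
    (hdeg : ∀ x ∈ rayCone p a, ∀ v, v ≠ 0 → (linePoly p x v).natDegree ≠ 0) :
    StrictConcaveOn ℝ (rayCone p a) fun x => Real.log (eval x p) := by
  have hconv := ha.convex_rayCone hp
  refine ⟨hconv, fun x hx y hy hxy b c hb hc hbc => ?_⟩
  have heval : ∀ t, (linePoly p x (y - x)).eval t = eval (x + t • (y - x)) p :=
    eval_linePoly p x (y - x)
  have hne : ∀ t ∈ Set.Icc (0 : ℝ) 1, (linePoly p x (y - x)).eval t ≠ 0 := fun t ht => by
    rw [heval]
    exact eval_ne_zero_of_mem_rayCone (hconv.add_smul_sub_mem hx hy ht)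
  have hline := strictConcaveOn_log_eval_of_splits
    ((ha.of_mem_rayCone hp hx).splits_linePoly_left hp (y - x))
    (hdeg x hx _ (sub_ne_zero.2 hxy.symm)) (convex_Icc 0 1) hne
  have hcombo : x + c • (y - x) = b • x + c • y := by
    obtain rfl : b = 1 - c := eq_sub_of_add_eq hbc
    module
  simpa [heval, hcombo] using hline.2 (Set.left_mem_Icc.2 zero_le_one)
    (Set.right_mem_Icc.2 zero_le_one) zero_ne_one hb hc hbc

theorem IsHypDir.posDef_hessNegLog {n : ℕ} {p : MvPolynomial (Fin n) ℝ} {a : Fin n → ℝ}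
    (hp : p.IsHomogeneous d) (ha : IsHypDir p a)
    (hdeg : ∀ v, v ≠ 0 → (linePoly p a v).natDegree ≠ 0) : (hessNegLog p a).PosDef := by
  have ha0 := ha.eval_ne_zero hp
  refine .of_dotProduct_mulVec_pos (isHermitian_hessNegLog p a) fun v hv => ?_
  rw [star_trivial, dotProduct_hessNegLog_mulVec ha0]
  have hpos := laguerre_eval_pos_of_splits (ha.splits_linePoly_left hp v) (hdeg v hv)
    (by rwa [eval_zero_linePoly])
  positivity

end HyperbolicDirections

section HyperbolicityCone

open MvPolynomial

variable {n d : ℕ} {p : MvPolynomial (Fin n) ℝ} {e : Fin n → ℝ}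

theorem hypCharPoly_eq_linePoly (p : MvPolynomial (Fin n) ℝ) (e x : Fin n → ℝ) :
    hypCharPoly p e x = linePoly p (-x) e := by
  rw [hypCharPoly, linePoly]
  congr 2
  funext i
  rw [Pi.neg_apply, map_neg]
  ring

theorem linePoly_ne_zero (hp : p.IsHomogeneous d) (he : eval e p ≠ 0) (x : Fin n → ℝ) :
    linePoly p x e ≠ 0 := fun h =>
  he (by rw [← aeval_eq_eval, ← coeff_linePoly hp x, h, Polynomial.coeff_zero])

theorem IsHyperbolicPoly.isHypDir (h : IsHyperbolicPoly p e d) : IsHypDir p e := fun x hx => by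
  obtain ⟨hp, he, hroots⟩ := h
  have hsplits : (linePoly p x e).Splits := by
    rw [Polynomial.splits_iff_card_roots, natDegree_linePoly hp x he, ← hroots (-x),
      hypCharPoly_eq_linePoly, neg_neg]
  have hroot : ((linePoly p x e).map (algebraMap ℝ ℂ)).IsRoot Complex.I := by
    rw [Polynomial.IsRoot, Polynomial.eval_map, ← Polynomial.aeval_def, aeval_linePoly_complex,
      tubePoint_add_smul]
    simpa using hx
  obtain ⟨r, hr⟩ := hsplits.mem_range_of_isRoot (linePoly_ne_zero hp he x) hroot
  simpa using congrArg Complex.im hr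

theorem IsHyperbolicPoly.mem_roots_hypCharPoly (h : IsHyperbolicPoly p e d) (x : Fin n → ℝ)
    (r : ℝ) : r ∈ (hypCharPoly p e x).roots ↔ eval (x + -r • e) p = 0 := by
  have hneg : -x + r • e = (-1 : ℝ) • (x + -r • e) := by module
  rw [hypCharPoly_eq_linePoly, Polynomial.mem_roots (linePoly_ne_zero h.1 h.2.1 _),
    Polynomial.IsRoot, eval_linePoly, aeval_eq_eval, hneg, eval_smul_of_isHomogeneous h.1]
  simp

theorem IsHyperbolicPoly.hypConeOpen_eq_rayCone (h : IsHyperbolicPoly p e d) :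
    hypConeOpen p e = rayCone p e := by
  ext x
  simp only [hypConeOpen, rayCone, Set.mem_ofPred_eq, h.mem_roots_hypCharPoly]
  refine ⟨fun hx s hs h0 => ?_, fun hx r h0 => not_le.1 fun hr => ?_⟩
  · exact hs.not_gt (neg_pos.1 (hx (-s) (by rwa [neg_neg])))
  · exact hx (-r) (neg_nonneg.2 hr) h0

theorem IsHyperbolicPoly.closure_rayCone_subset_hypConeClosed (h : IsHyperbolicPoly p e d) :
    closure (rayCone p e) ⊆ hypConeClosed p e := fun x hx r hr => not_lt.1 fun hr0 =>
  h.isHypDir.eval_add_smul_ne_zero_of_mem_closure h.1 hx (neg_pos.2 hr0)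
    ((h.mem_roots_hypCharPoly x r).1 hr)

theorem IsRegularCone.natDegree_linePoly_ne_zero (hreg : IsRegularCone p e)
    (h : IsHyperbolicPoly p e d) {a : Fin n → ℝ} (ha : a ∈ rayCone p e) {v : Fin n → ℝ}
    (hv : v ≠ 0) : (linePoly p a v).natDegree ≠ 0 := fun hdeg => by
  refine hv (Submodule.span_singleton_eq_bot.1 (hreg (Submodule.span ℝ {v}) fun w hw => ?_))
  obtain ⟨c, rfl⟩ := Submodule.mem_span_singleton.1 hw
  refine h.closure_rayCone_subset_hypConeClosed ?_
  have hadir := h.isHypDir.of_mem_rayCone h.1 ha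
  rw [← h.isHypDir.rayCone_eq h.1 ha]
  exact smul_mem_closure_rayCone h.1 (hadir.eval_ne_zero h.1) hdeg c

end HyperbolicityCone

/-- Proposition 8.6 in RS14.
If the hyperbolicity cone is regular, then for every `e' ∈ Λ₊₊` the Hessian of `-ln p` at `e'`
is positive definite; in particular `-ln p` is strictly convex on `Λ₊₊`. -/
theorem stmt4 {n d : ℕ} (hd : 1 ≤ d) (p : MvPolynomial (Fin n) ℝ) (e : Fin n → ℝ)
    (hp : IsHyperbolicPoly p e d) (hpe : 0 < MvPolynomial.eval e p)
    (hreg : IsRegularCone p e) :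
    (∀ e' ∈ hypConeOpen p e, (hessNegLog p e').PosDef) ∧
    StrictConvexOn ℝ (hypConeOpen p e)
      (fun x : Fin n → ℝ => -Real.log (MvPolynomial.eval x p)) := by
  have hdir : IsHypDir p e := hp.isHypDir
  have hdeg : ∀ a ∈ rayCone p e, ∀ v, v ≠ 0 → (linePoly p a v).natDegree ≠ 0 :=
    fun _ ha _ hv => hreg.natDegree_linePoly_ne_zero hp ha hv
  rw [hp.hypConeOpen_eq_rayCone]
  exact ⟨fun a ha => (hdir.of_mem_rayCone hp.1 ha).posDef_hessNegLog hp.1 (hdeg a ha),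
    (hdir.strictConcaveOn_log_eval hp.1 hdeg).neg⟩
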